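/- arXiv:2006.04668 — 4 statements merged into one kernel-verified Lean document; each statement's English description precedes it below -/
import Mathlib

section
/- Let λ = (λ_1,…,λ_n) ∈ ℤ^n be a 𝔨-dominant integral weight with λ_n > 2n, and let w be an element of the Weyl group W of type C_n. If ω = w·λ (dot action) is 𝔨-dominant, then either ω = λ or ω_n < 0. Equivalently: if ω ∈ ℤ^n satisfies ω_1 ≥ … ≥ ω_n and there exist a permutation σ of {1,…,n} and signs ε ∈ {±1}^n with ω_j − j = ε_j (λ_{σ(j)} − σ(j)) for all j, then ω = λ or ω_n < 0. -/
/-!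
Since `λ_n > 2n`, every `λ_i - i` exceeds `n`. A single sign `-1` at position `j` therefore forces
`ω_j < 0`, hence `ω_n < 0` by dominance. If all signs are `+1`, then `ω_j - j` and `λ_j - j` are both
strictly decreasing in `j` and `σ` carries one to the other, so `σ` is strictly increasing, i.e. the
identity.
-/

/-- Let `λ ∈ ℤ^n` be a `𝔨`-dominant integral weight (`λ_1 ≥ … ≥ λ_n`) with
`λ_n > 2n` and let `w` be an element of the Weyl group of type `C_n`, realized as a
signed permutation (a permutation `σ` together with signs `ε ∈ {±1}^n`).
If `ω = w · λ` (dot action with `ρ = (-1, …, -n)`, i.e.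
`ω_j - j = ε_j (λ_{σ(j)} - σ(j))` for all `j`) is `𝔨`-dominant, then `ω = λ` or
`ω_n < 0`.  (Indices below are `0`-based, so the `1`-based index `j` corresponds
to the `Fin n` element `j - 1`.) -/
theorem dot_orbit_dominant_eq_or_neg
    (n : ℕ) (hn : 1 ≤ n) (lam ω : Fin n → ℤ)
    (hlamdom : ∀ p q : Fin n, p ≤ q → lam q ≤ lam p)
    (hlam : 2 * (n : ℤ) < lam ⟨n - 1, by omega⟩)
    (hωdom : ∀ p q : Fin n, p ≤ q → ω q ≤ ω p)
    (σ : Equiv.Perm (Fin n)) (ε : Fin n → ℤ)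
    (hε : ∀ j : Fin n, ε j = 1 ∨ ε j = -1)
    (h : ∀ j : Fin n, ω j - ((j : ℤ) + 1) = ε j * (lam (σ j) - ((σ j : ℤ) + 1))) :
    ω = lam ∨ ω ⟨n - 1, by omega⟩ < 0 := by
  have last_le (j : Fin n) : j ≤ ⟨n - 1, by omega⟩ := by
    rw [Fin.le_def]
    have := j.isLt
    simp only
    omega
  by_cases hneg : ∃ j, ε j = -1
  · right
    obtain ⟨j, hj⟩ := hneg
    have h1 := h j
    rw [hj] at h1
    have h2 := hlamdom _ _ (last_le (σ j))
    have h3 := hωdom _ _ (last_le j)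
    have h4 := (σ j).isLt
    have h5 := j.isLt
    omega
  · left
    have hpos : ∀ j, ω j - ((j : ℤ) + 1) = lam (σ j) - ((σ j : ℤ) + 1) := fun j ↦ by
      rw [h j, (hε j).resolve_right fun hj ↦ hneg ⟨j, hj⟩, one_mul]
    have hmono : StrictMono σ := by
      intro a b hab
      by_contra! hle
      have h1 := hpos a
      have h2 := hpos b
      have h3 := hωdom a b hab.le
      have h4 := hlamdom _ _ hle
      rw [Fin.lt_def] at hab
      rw [Fin.le_def] at hle
      omega
    have hid : (σ : Fin n → Fin n) = id :=
      (hmono.range_inj strictMono_id).1 (by simp [σ.surjective.range_eq])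
    funext j
    have h1 := hpos j
    rw [hid, id] at h1
    omega
end

section
/- The natural map Y → X/∼ induced by the inclusion Y ⊆ X is bijective. Equivalently: for every x ∈ X there exists exactly one y ∈ Y such that x ∼ y, i.e. such that v(x) and v(y) lie in the same orbit of the group of signed permutations of ℤ^n. -/
/-!
Put `N = 2n - i + 1`. Signed permutations preserve the sum of the squares of the entries, and
`‖v(s)‖² - ‖v(s')‖² = i (s - s') (s + s' - N)`, so `s ∼ s'` forces `s' = s` or `s' = N - s`.
Conversely `s ∼ N - s`: reversing the last `i` coordinates and changing their signs
carries `v(s)` to `v(N - s)`. So the classes of `∼` are the orbits of the reflection `s ↦ N - s`,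
and `Y` contains exactly one point of the trace on `X` of each orbit that meets `X`: the points
`x ≥ N + 1` have a negative reflection, which is outside `X`, and among `x, N - x ∈ [0, N]` the
smaller one is in `Z`.
-/

/-- The Harish-Chandra parameter `v(s) ∈ ℤ^n` of the induced representation
`I_{P_{i,n}}(s, μ, L(λ_1, …, λ_{n-i}))`: its `k`-th entry (with `k : Fin n`,
`0`-based) is `λ_{k+1} - (k+1)` for `k + 1 ≤ n - i` and `s - (k+1)` otherwise. -/
def HCparam (n i : ℕ) (lam : Fin (n - i) → ℤ) (s : ℤ) (k : Fin n) : ℤ :=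
  if h : (k : ℕ) < n - i then lam ⟨(k : ℕ), h⟩ - ((k : ℤ) + 1) else s - ((k : ℤ) + 1)

/-- `s ∼ s'` : the vectors `v(s)` and `v(s')` lie in the same orbit of the group
of signed permutations of `ℤ^n` (the Weyl group of type `C_n`); explicitly some
signed permutation maps `v(s)` to `v(s')`. -/
def HCrel (n i : ℕ) (lam : Fin (n - i) → ℤ) (s s' : ℤ) : Prop :=
  ∃ (σ : Equiv.Perm (Fin n)) (ε : Fin n → ℤ),
    (∀ j : Fin n, ε j = 1 ∨ ε j = -1) ∧
    ∀ j : Fin n, HCparam n i lam s' j = ε j * HCparam n i lam s (σ j)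

/-- For `D = s - s'`, `a = s + s'` and `m = n - i`, the summand is the difference of the squares
of the `j`-th entries of `v(s)` and `v(s')`. -/
lemma sum_tail (m i : ℕ) (D a : ℤ) :
    ∑ j ∈ Finset.range (m + i), (if j < m then 0 else D * (a - 2 * ((j : ℤ) + 1))) =
      (i : ℤ) * (D * (a - (2 * m + i + 1))) := by
  induction i with
  | zero =>
    simp only [add_zero, Nat.cast_zero, zero_mul]
    exact Finset.sum_eq_zero fun j hj => if_pos (Finset.mem_range.mp hj)
  | succ i ih =>
    rw [← add_assoc, Finset.sum_range_succ, ih, if_neg (by omega)]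
    push_cast
    ring

lemma HCparam_sq_sub (n i : ℕ) (hi : i ≤ n) (lam : Fin (n - i) → ℤ) (s s' : ℤ) :
    ∑ j, HCparam n i lam s j ^ 2 - ∑ j, HCparam n i lam s' j ^ 2 =
      (i : ℤ) * ((s - s') * (s + s' - (2 * n - i + 1))) := by
  have h := sum_tail (n - i) i (s - s') (s + s')
  rw [Nat.sub_add_cancel hi, Nat.cast_sub hi] at h
  rw [← Finset.sum_sub_distrib,
    show (2 * (n : ℤ) - i + 1) = 2 * ((n : ℤ) - i) + i + 1 by ring, ← h, Finset.sum_range]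
  refine Finset.sum_congr rfl fun j _ => ?_
  unfold HCparam
  split_ifs
  · ring
  · ring

lemma HCrel.eq_or_eq {n i : ℕ} (hi1 : 1 ≤ i) (hi : i ≤ n) {lam : Fin (n - i) → ℤ} {s s' : ℤ}
    (h : HCrel n i lam s s') : s' = s ∨ s' = 2 * n - i + 1 - s := by
  obtain ⟨σ, ε, hε, h⟩ := h
  have hs : ∑ j, HCparam n i lam s' j ^ 2 = ∑ j, HCparam n i lam s j ^ 2 := by
    rw [← Equiv.sum_comp σ fun j => HCparam n i lam s j ^ 2]
    refine Finset.sum_congr rfl fun j _ => ?_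
    rw [h j, mul_pow]
    rcases hε j with e | e <;> simp [e]
  have key := HCparam_sq_sub n i hi lam s s'
  rw [hs, sub_self] at key
  rcases mul_eq_zero.mp key.symm with h0 | h0
  · omega
  · rcases mul_eq_zero.mp h0 with h0 | h0
    · left; omega
    · right; omega

lemma HCrel.refl (n i : ℕ) (lam : Fin (n - i) → ℤ) (s : ℤ) : HCrel n i lam s s :=
  ⟨Equiv.refl _, fun _ => 1, fun _ => Or.inl rfl, fun j => by simp⟩

/-- The permutation of `Fin n` fixing the first `n - i` indices and reversing the others. -/
def tailRev (n i : ℕ) : Equiv.Perm (Fin n) :=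
  Function.Involutive.toPerm
    (fun j => if h : (j : ℕ) < n - i then j else ⟨n - i + (n - 1 - j), by omega⟩) (by
      intro j
      by_cases h : (j : ℕ) < n - i
      · simp [h]
      · ext
        simp [h]
        omega)

lemma HCrel.reflect {n i : ℕ} (hi : i ≤ n) (lam : Fin (n - i) → ℤ) (s : ℤ) :
    HCrel n i lam s (2 * n - i + 1 - s) := by
  refine ⟨tailRev n i, fun j => if (j : ℕ) < n - i then 1 else -1, fun j => ?_, fun j => ?_⟩
  · by_cases h : (j : ℕ) < n - i <;> simp [h]
  · by_cases h : (j : ℕ) < n - i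
    · have e : tailRev n i j = j := dif_pos h
      simp [HCparam, e, h]
    · have e : tailRev n i j = ⟨n - i + (n - 1 - j), by omega⟩ := dif_neg h
      simp [HCparam, e, h]
      omega

/-- With `X = {0, …, λ_{n-i}}`, `Z = {x ∈ X : 2x ≤ 2n - i + 1}` and
`Y = Z ∪ {x ∈ X : x ≥ 2n - i + 2}`, the natural map `Y → X/∼` is bijective:
for every `x ∈ X` there is exactly one `y ∈ Y` with `x ∼ y`. -/
theorem dot_orbit_Y_bijective
    (n i : ℕ) (hi1 : 1 ≤ i) (hi2 : i < n)
    (lam : Fin (n - i) → ℤ)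
    (hmono : ∀ p q : Fin (n - i), p ≤ q → lam q ≤ lam p)
    (hpos : 0 ≤ lam ⟨n - i - 1, by omega⟩) :
    ∀ x : ℤ, x ∈ Set.Icc (0 : ℤ) (lam ⟨n - i - 1, by omega⟩) →
      ∃! y : ℤ,
        (y ∈ Set.Icc (0 : ℤ) (lam ⟨n - i - 1, by omega⟩) ∧
          (2 * y ≤ 2 * (n : ℤ) - (i : ℤ) + 1 ∨ 2 * (n : ℤ) - (i : ℤ) + 2 ≤ y)) ∧
        HCrel n i lam x y := by
  rintro x ⟨hx0, hx1⟩
  by_cases hY : 2 * x ≤ 2 * (n : ℤ) - (i : ℤ) + 1 ∨ 2 * (n : ℤ) - (i : ℤ) + 2 ≤ x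
  · refine ⟨x, ⟨⟨⟨hx0, hx1⟩, hY⟩, HCrel.refl n i lam x⟩, ?_⟩
    rintro y ⟨⟨⟨hy0, hy1⟩, hy⟩, hr⟩
    rcases hr.eq_or_eq hi1 hi2.le with h | h <;> omega
  · refine ⟨2 * n - i + 1 - x, ⟨⟨⟨by omega, ?_⟩, by omega⟩, HCrel.reflect hi2.le lam x⟩, ?_⟩
    · exact le_trans (by omega) hx1
    rintro y ⟨⟨⟨hy0, hy1⟩, hy⟩, hr⟩
    rcases hr.eq_or_eq hi1 hi2.le with h | h <;> omega
end

section
/- Let ℓ, ℓ' ∈ X with ℓ < ℓ', 2ℓ ≤ 2n−i+1 and 2ℓ' ≤ 2n−i+1 (i.e. ℓ, ℓ' ∈ Z). Then ℓ ≁ ℓ': there is no signed permutation of ℤ^n mapping v(ℓ) to v(ℓ'). In other words, the composite map Z ↪ Y → X/∼ is injective. -/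
lemma sum_range_tail (m i : ℕ) (D S : ℤ) :
    ∑ k ∈ Finset.range (m + i), (if k < m then 0 else D * (S - 2 * ((k : ℤ) + 1))) =
      D * i * (S - (2 * m + i + 1)) := by
  rw [Finset.sum_range_add, Finset.sum_eq_zero, zero_add]
  · induction i with
    | zero => simp
    | succ i ih =>
      rw [Finset.sum_range_succ, ih, if_neg (by omega)]
      push_cast
      ring
  · intro k hk
    rw [if_pos (Finset.mem_range.mp hk)]

lemma sum_sq_HCparam_sub (n i : ℕ) (hi : i ≤ n) (lam : Fin (n - i) → ℤ) (s s' : ℤ) :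
    ∑ j, HCparam n i lam s' j ^ 2 - ∑ j, HCparam n i lam s j ^ 2 =
      (s' - s) * i * (s + s' - (2 * n - i + 1)) := by
  have h := sum_range_tail (n - i) i (s' - s) (s + s')
  rw [Nat.sub_add_cancel hi, Finset.sum_range, Nat.cast_sub hi] at h
  rw [← Finset.sum_sub_distrib]
  calc _ = _ := Finset.sum_congr rfl fun j _ => by
        unfold HCparam
        split_ifs
        · exact sub_self _
        · ring
    _ = _ := h
    _ = _ := by ring

lemma HCrel.sum_sq_eq {n i : ℕ} {lam : Fin (n - i) → ℤ} {s s' : ℤ} (h : HCrel n i lam s s') :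
    ∑ j, HCparam n i lam s' j ^ 2 = ∑ j, HCparam n i lam s j ^ 2 := by
  obtain ⟨σ, ε, hε, h⟩ := h
  rw [← Equiv.sum_comp σ fun j => HCparam n i lam s j ^ 2]
  refine Finset.sum_congr rfl fun j _ => ?_
  rcases hε j with e | e <;> rw [h j, e] <;> ring

/-- If `ℓ, ℓ' ∈ X = {0, …, λ_{n-i}}` satisfy `ℓ < ℓ'`, `2ℓ ≤ 2n - i + 1` and
`2ℓ' ≤ 2n - i + 1` (i.e. `ℓ, ℓ' ∈ Z`), then `ℓ ≁ ℓ'`: no signed permutation of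
`ℤ^n` maps `v(ℓ)` to `v(ℓ')`.  In other words the composite `Z ↪ Y → X/∼` is
injective. -/
theorem dot_orbit_Z_injective
    (n i : ℕ) (hi1 : 1 ≤ i) (hi2 : i < n)
    (lam : Fin (n - i) → ℤ)
    (hmono : ∀ p q : Fin (n - i), p ≤ q → lam q ≤ lam p)
    (hpos : 0 ≤ lam ⟨n - i - 1, by omega⟩)
    (ℓ ℓ' : ℤ)
    (hℓX : ℓ ∈ Set.Icc (0 : ℤ) (lam ⟨n - i - 1, by omega⟩))
    (hℓ'X : ℓ' ∈ Set.Icc (0 : ℤ) (lam ⟨n - i - 1, by omega⟩))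
    (hlt : ℓ < ℓ')
    (hℓZ : 2 * ℓ ≤ 2 * (n : ℤ) - (i : ℤ) + 1)
    (hℓ'Z : 2 * ℓ' ≤ 2 * (n : ℤ) - (i : ℤ) + 1) :
    ¬ HCrel n i lam ℓ ℓ' := by
  intro h
  have key := sum_sq_HCparam_sub n i hi2.le lam ℓ ℓ'
  rw [h.sum_sq_eq, sub_self] at key
  have hD : ℓ' - ℓ ≠ 0 := by omega
  have hi : (i : ℤ) ≠ 0 := by omega
  have hS : ℓ + ℓ' - (2 * (n : ℤ) - i + 1) ≠ 0 := by omega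
  exact mul_ne_zero (mul_ne_zero hD hi) hS key.symm
end

section
/- Fix integers n ≥ 1, 1 ≤ i ≤ n, integers λ_1 ≥ … ≥ λ_{n−i}, and a positive integer s₀ with 2s₀ ≥ 2n−i+1 and λ_{n−i} ≥ s₀. Set Λ = (λ_1,…,λ_{n−i},s₀,…,s₀) ∈ ℤ^n (the last i entries equal to s₀). If μ ∈ ℤ^n is 𝔨-dominant (μ_1 ≥ … ≥ μ_n), satisfies μ_n ≥ s₀, and μ = w·Λ for some element w of the Weyl group of type C_n (i.e. μ+ρ lies in the signed-permutation orbit of Λ+ρ), then μ = Λ. -/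
/-!
Put `m = s₀ - n`. Both `Λ + ρ` and `μ + ρ` are strictly decreasing with all entries `≥ m`, and the
last `i` entries of `Λ + ρ` fill the integer interval `[m, m + i - 1]`. The hypothesis
`2 s₀ ≥ 2n - i + 1` says exactly that `m + i - 1 ≥ -m`, so the whole interval `[m, -m]` consists
of entries of `Λ + ρ`. If a sign change turns an entry `v` of `Λ + ρ` into an entry `-v` of
`μ + ρ`, then `v ≥ m` and `-v ≥ m`, so `-v ∈ [m, -m]` is again an entry of `Λ + ρ`.
Hence every entry of `μ + ρ` is an entry of `Λ + ρ`; as both have `n` distinct entries in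
decreasing order, they are equal.
-/

/-- Two strictly decreasing integer sequences of the same finite length coincide as soon as the
entries of one are among the entries of the other. -/
lemma eq_of_strictAnti_of_range_subset {n : ℕ} {a b : Fin n → ℤ} (ha : StrictAnti a)
    (hb : StrictAnti b) (hab : ∀ j, ∃ k, a k = b j) : b = a := by
  choose τ hτ using hab
  have hτmono : StrictMono τ := fun p q hpq => by
    rw [← ha.lt_iff_gt, hτ, hτ]
    exact hb hpq
  -- A strictly increasing self-map of `Fin n` is the identity.
  have hid : τ = id := by
    refine (hτmono.range_inj strictMono_id).1 ?_
    rw [(Finite.surjective_of_injective hτmono.injective).range_eq, Set.range_id]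
  funext j
  rw [← hτ j, hid, id]

/-- Fix `n ≥ 1`, `1 ≤ i ≤ n`, integers `λ_1 ≥ … ≥ λ_{n-i}` and a positive
integer `s₀` with `2s₀ ≥ 2n - i + 1` and `λ_{n-i} ≥ s₀`.  Set
`Λ = (λ_1, …, λ_{n-i}, s₀, …, s₀) ∈ ℤ^n` (last `i` entries equal to `s₀`).
If `μ ∈ ℤ^n` is `𝔨`-dominant (`μ_1 ≥ … ≥ μ_n`), satisfies `μ_n ≥ s₀`, and
`μ = w · Λ` for some element `w` of the Weyl group of type `C_n` — i.e. `μ + ρ`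
lies in the signed-permutation orbit of `Λ + ρ`, where `ρ = (-1, …, -n)` so that
`(μ + ρ)_j = μ_j - j` — then `μ = Λ`.  (Indices below are `0`-based.) -/
theorem dot_orbit_dominant_unique
    (n i : ℕ) (hi1 : 1 ≤ i) (hi2 : i ≤ n)
    (lam : Fin (n - i) → ℤ)
    (hmono : ∀ p q : Fin (n - i), p ≤ q → lam q ≤ lam p)
    (s₀ : ℤ) (hs₀pos : 0 < s₀)
    (hs₀ : 2 * (n : ℤ) - (i : ℤ) + 1 ≤ 2 * s₀)
    (hlam : ∀ k : Fin (n - i), s₀ ≤ lam k)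
    (μ : Fin n → ℤ)
    (hμdom : ∀ p q : Fin n, p ≤ q → μ q ≤ μ p)
    (hμn : s₀ ≤ μ ⟨n - 1, by omega⟩)
    (σ : Equiv.Perm (Fin n)) (ε : Fin n → ℤ)
    (hε : ∀ j : Fin n, ε j = 1 ∨ ε j = -1)
    (h : ∀ j : Fin n, μ j - ((j : ℤ) + 1)
        = ε j * ((if hj : (σ j : ℕ) < n - i then lam ⟨(σ j : ℕ), hj⟩ else s₀)
            - ((σ j : ℤ) + 1))) :
    ∀ k : Fin n, μ k = if hk : (k : ℕ) < n - i then lam ⟨(k : ℕ), hk⟩ else s₀ := by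
  set Λ : Fin n → ℤ := fun k => if hk : (k : ℕ) < n - i then lam ⟨(k : ℕ), hk⟩ else s₀ with hΛ
  have hΛs : ∀ k, s₀ ≤ Λ k := fun k => by
    simp only [hΛ]
    split_ifs
    exacts [hlam _, le_rfl]
  have hΛdom : ∀ p q, p ≤ q → Λ q ≤ Λ p := fun p q hpq => by
    have hpq' : (p : ℕ) ≤ q := hpq
    by_cases hq : (q : ℕ) < n - i
    · have hp : (p : ℕ) < n - i := by omega
      simp only [hΛ, dif_pos hp, dif_pos hq]
      exact hmono _ _ hpq
    · have hq' : Λ q = s₀ := dif_neg hq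
      exact hq'.trans_le (hΛs p)
  have hanti : ∀ f : Fin n → ℤ, (∀ p q, p ≤ q → f q ≤ f p) →
      StrictAnti fun j : Fin n => f j - ((j : ℤ) + 1) := fun f hf p q hpq => by
    have h1 := hf p q hpq.le
    have h2 : (p : ℕ) < q := hpq
    dsimp only
    omega
  have key : ∀ j : Fin n, ∃ k : Fin n, Λ k - ((k : ℤ) + 1) = μ j - ((j : ℤ) + 1) := fun j => by
    have hj : μ j - ((j : ℤ) + 1) = ε j * (Λ (σ j) - ((σ j : ℤ) + 1)) := h j
    rcases hε j with he | he
    · exact ⟨σ j, by rw [hj, he, one_mul]⟩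
    · rw [he] at hj
      have hμj : s₀ ≤ μ j := hμn.trans (hμdom _ _ (Fin.mk_le_mk.2 (by omega)))
      have hΛj := hΛs (σ j)
      have hjn := j.isLt
      have hσn := (σ j).isLt
      -- The entry `μ j - (j + 1)` lies in `[s₀ - n, n - s₀]`, so it equals `s₀ - (k + 1)` for
      -- an index `k` among the last `i`.
      obtain ⟨k, hk⟩ : ∃ k : ℕ, (k : ℤ) = s₀ - 1 - (μ j - ((j : ℤ) + 1)) :=
        ⟨(s₀ - 1 - (μ j - ((j : ℤ) + 1))).toNat, Int.toNat_of_nonneg (by omega)⟩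
      have hkn : k < n := by omega
      have hki : ¬ k < n - i := by omega
      have hΛk : Λ ⟨k, hkn⟩ = s₀ := dif_neg hki
      refine ⟨⟨k, hkn⟩, ?_⟩
      rw [hΛk]
      dsimp only
      omega
  have heq := eq_of_strictAnti_of_range_subset (hanti Λ hΛdom) (hanti μ hμdom) key
  intro k
  exact sub_left_injective (congrFun heq k)
end
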